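/- arXiv:1804.11033 — 3 statements merged into one kernel-verified Lean document; each statement's English description precedes it below -/
import Mathlib

section
/- The critical side-length of the pattern (4,4,4) is a_c((4,4,4)) = 2·arccos(√6/3), i.e. 6·arcsin(cos(π/4)/(√6/3)) = 2π. Moreover K at this side length also vanishes for the pattern (3,4,5): 2·arcsin(√6/4) + 2·arcsin((√5+1)·√6/8) = 4π/3, equivalently sin(π/3 + arcsin(√6/4)) = (√5+1)·√6/8. Consequently a_c((3,4,5)) = a_c((4,4,4)) = 2·arccos(√6/3). -/
/-- The angle defect `K_a(p) = 2π − Σ_{f ∈ p} 2·arcsin(cos(π/f)/cos(a/2))` of a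
vertex pattern given as a list. -/
noncomputable def K (p : List ℕ) (a : ℝ) : ℝ :=
  2 * Real.pi -
    (p.map (fun f => 2 * Real.arcsin (Real.cos (Real.pi / (f : ℝ)) / Real.cos (a / 2)))).sum

/-- The critical side-length `a_c(p) = max{a ∈ [0, 2π/f_N] : K_a(p) ≥ 0}` of a
vertex pattern, where `f_N` is the last (largest) entry. -/
noncomputable def ac (p : List ℕ) : ℝ :=
  sSup {a : ℝ | a ∈ Set.Icc 0 (2 * Real.pi / (p.getLast! : ℝ)) ∧ 0 ≤ K p a}

/-!
As long as `a ≤ 2π/f`, the angle of a regular spherical `f`-gon is strictly increasing in its side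
length `a`, so on `[0, 2π/f_N]` the defect `K` is strictly decreasing and any zero of `K` there is
the critical side-length. At `cos (a/2) = √6/3` the square has angle `2π/3`, which makes `K` vanish
for `(4,4,4)`; it vanishes for `(3,4,5)` as well because the half-angles `arcsin (√6/4)` of the
triangle and `arcsin ((√5+1)√6/8)` of the pentagon sum to `2π/3`, by the addition formula for
`sin (π/3 + arcsin (√6/4))`. That `(√5+1)√6/8` is a sine, hence at most `1`, also shows that this
`a` is at most `2π/5`.
-/

open Real Set

/-- The interior angle of the regular spherical `f`-gon of side length `a` on the unit sphere; the
angle defect `K` subtracts one such angle per face from `2π`. -/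
noncomputable def sphericalAngle (f : ℕ) (a : ℝ) : ℝ :=
  2 * arcsin (cos (π / f) / cos (a / 2))

-- In `K`, the ascription `(f : ℝ)` makes Lean coerce the whole list `p` to `List ℝ`, by a monadic
-- bind, before mapping over it; hence the proof is not `rfl`.
theorem K_eq_sub_sum_sphericalAngle (p : List ℕ) (a : ℝ) :
    K p a = 2 * π - (p.map (sphericalAngle · a)).sum := by
  simp only [K, bind_pure_comp, List.map_eq_map, List.map_map, Function.comp_def, sphericalAngle]

theorem cos_pi_div_natCast_pos {f : ℕ} (hf : 3 ≤ f) : 0 < cos (π / f) := by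
  have hf' : (2 : ℝ) < f := by exact_mod_cast hf
  have hnonneg : 0 ≤ π / f := by positivity
  exact cos_pos_of_mem_Ioo
    ⟨by linarith [pi_pos], div_lt_div_of_pos_left pi_pos two_pos hf'⟩

theorem strictMonoOn_sphericalAngle {f : ℕ} (hf : 3 ≤ f) :
    StrictMonoOn (sphericalAngle f) (Icc 0 (2 * π / f)) := by
  intro a ha b hb hab
  have hcos : 0 < cos (π / f) := cos_pi_div_natCast_pos hf
  have hfπ : π / f ≤ π := div_le_self pi_nonneg (by exact_mod_cast (by lia : 1 ≤ f))
  have hb_le : b / 2 ≤ π / f := by linarith [hb.2, mul_div_assoc 2 π (f : ℝ)]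
  have hcos_b : cos (π / f) ≤ cos (b / 2) :=
    cos_le_cos_of_nonneg_of_le_pi (by linarith [hb.1]) hfπ hb_le
  have hcos_lt : cos (b / 2) < cos (a / 2) :=
    cos_lt_cos_of_nonneg_of_le_pi (by linarith [ha.1]) (hb_le.trans hfπ) (by linarith)
  have hcos_b_pos : 0 < cos (b / 2) := hcos.trans_le hcos_b
  have hratio_nonneg : 0 ≤ cos (π / f) / cos (a / 2) :=
    div_nonneg hcos.le (hcos_b_pos.trans hcos_lt).le
  exact mul_lt_mul_of_pos_left
    (arcsin_lt_arcsin (by linarith) (div_lt_div_of_pos_left hcos hcos_b_pos hcos_lt)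
      ((div_le_one hcos_b_pos).2 hcos_b)) two_pos

theorem strictAntiOn_K {p : List ℕ} {n : ℕ} (hne : p ≠ []) (hp : ∀ f ∈ p, 3 ≤ f ∧ f ≤ n) :
    StrictAntiOn (K p) (Icc 0 (2 * π / n)) := by
  intro a ha b hb hab
  have hangle : ∀ f ∈ p, sphericalAngle f a < sphericalAngle f b := by
    intro f hf
    obtain ⟨h3, hn⟩ := hp f hf
    have hsub : Icc 0 (2 * π / n) ⊆ Icc 0 (2 * π / f) := Icc_subset_Icc_right (by gcongr)
    exact strictMonoOn_sphericalAngle h3 (hsub ha) (hsub hb) hab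
  rw [K_eq_sub_sum_sphericalAngle, K_eq_sub_sum_sphericalAngle]
  exact sub_lt_sub_left (List.sum_lt_sum_of_ne_nil hne _ _ hangle) _

theorem ac_eq_of_K_eq_zero {p : List ℕ} {a : ℝ} (hp : ∀ f ∈ p, 3 ≤ f ∧ f ≤ p.getLast!)
    (ha : a ∈ Icc 0 (2 * π / p.getLast!)) (hK : K p a = 0) : ac p = a := by
  have hne : p ≠ [] := by
    rintro rfl
    simp [K] at hK
  refine IsGreatest.csSup_eq ⟨⟨ha, hK.ge⟩, fun b ⟨hb, hKb⟩ ↦ ?_⟩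
  exact ((strictAntiOn_K hne hp).le_iff_ge ha hb).1 (hK.trans_le hKb)

theorem K_two_mul_arccos (p : List ℕ) {c : ℝ} (h₁ : -1 ≤ c) (h₂ : c ≤ 1) :
    K p (2 * arccos c) = 2 * π - (p.map fun f : ℕ ↦ 2 * arcsin (cos (π / f) / c)).sum := by
  simp only [K_eq_sub_sum_sphericalAngle, sphericalAngle, mul_div_cancel_left₀ _ (two_ne_zero' ℝ),
    cos_arccos h₁ h₂]

theorem sqrt_six_eq_mul : √6 = √2 * √3 := by
  rw [← sqrt_mul zero_le_two]
  norm_num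

theorem sqrt_six_lt_three : √6 < 3 :=
  (sqrt_lt' three_pos).2 (by norm_num)

theorem cos_pi_div_three_div_sqrt_six_div_three : cos (π / 3) / (√6 / 3) = √6 / 4 := by
  rw [cos_pi_div_three, div_eq_iff (by positivity)]
  linarith [mul_self_sqrt (show (0 : ℝ) ≤ 6 by norm_num)]

theorem arcsin_cos_pi_div_four_div_sqrt_six_div_three :
    arcsin (cos (π / 4) / (√6 / 3)) = π / 3 := by
  have hratio : cos (π / 4) / (√6 / 3) = sin (π / 3) := by
    rw [cos_pi_div_four, sin_pi_div_three, sqrt_six_eq_mul, div_eq_iff (by positivity)]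
    linear_combination -(√2 / 6) * sq_sqrt (zero_le_three (α := ℝ))
  rw [hratio, arcsin_sin (by linarith [pi_pos]) (by linarith [pi_pos])]

theorem cos_pi_div_five_div_sqrt_six_div_three :
    cos (π / 5) / (√6 / 3) = (√5 + 1) * √6 / 8 := by
  rw [cos_pi_div_five, div_eq_iff (by positivity)]
  linear_combination -((√5 + 1) / 24) * sq_sqrt (show (0 : ℝ) ≤ 6 by norm_num)

theorem cos_arcsin_sqrt_six_div_four : cos (arcsin (√6 / 4)) = √2 * √5 / 4 := by
  rw [cos_arcsin, sqrt_eq_iff_mul_self_eq_of_pos (by positivity)]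
  have h2 : √2 ^ 2 = (2 : ℝ) := sq_sqrt (by norm_num)
  have h5 : √5 ^ 2 = (5 : ℝ) := sq_sqrt (by norm_num)
  have h6 : √6 ^ 2 = (6 : ℝ) := sq_sqrt (by norm_num)
  linear_combination (√5 ^ 2 / 16) * h2 + h5 / 8 + h6 / 16

theorem sin_pi_div_three_add_arcsin_sqrt_six_div_four :
    sin (π / 3 + arcsin (√6 / 4)) = (√5 + 1) * √6 / 8 := by
  have hsin : sin (arcsin (√6 / 4)) = √6 / 4 :=
    sin_arcsin (by linarith [sqrt_nonneg 6]) (by linarith [sqrt_six_lt_three])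
  rw [sin_add, hsin, cos_arcsin_sqrt_six_div_four, sin_pi_div_three, cos_pi_div_three,
    sqrt_six_eq_mul]
  ring

theorem pi_div_six_le_arcsin_sqrt_six_div_four : π / 6 ≤ arcsin (√6 / 4) := by
  rw [le_arcsin_iff_sin_le' ⟨by linarith [pi_pos], by linarith [pi_pos]⟩, sin_pi_div_six]
  linarith [le_sqrt_of_sq_le (show (2 : ℝ) ^ 2 ≤ 6 by norm_num)]

theorem arcsin_sqrt_six_div_four_add_arcsin :
    arcsin (√6 / 4) + arcsin ((√5 + 1) * √6 / 8) = 2 * π / 3 := by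
  -- `π / 3 + arcsin (√6 / 4)` is obtuse, so it is its supplement that `arcsin` recovers.
  have hlower := pi_div_six_le_arcsin_sqrt_six_div_four
  have hupper : arcsin (√6 / 4) ≤ π / 2 := arcsin_le_pi_div_two _
  rw [← sin_pi_div_three_add_arcsin_sqrt_six_div_four, ← sin_pi_sub,
    arcsin_sin (by linarith [pi_pos]) (by linarith)]
  ring

theorem arccos_sqrt_six_div_three_le_pi_div_five : arccos (√6 / 3) ≤ π / 5 := by
  have hratio : cos (π / 5) / (√6 / 3) ≤ 1 := by
    rw [cos_pi_div_five_div_sqrt_six_div_three, ← sin_pi_div_three_add_arcsin_sqrt_six_div_four]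
    exact sin_le_one _
  calc arccos (√6 / 3) ≤ arccos (cos (π / 5)) :=
        arccos_le_arccos ((div_le_one (by positivity)).1 hratio)
    _ = π / 5 := arccos_cos (by positivity) (by linarith [pi_pos])

theorem two_mul_arccos_sqrt_six_div_three_mem_Icc {n : ℕ} (hn : 0 < n) (hn5 : n ≤ 5) :
    2 * arccos (√6 / 3) ∈ Icc 0 (2 * π / n) := by
  refine ⟨by linarith [arccos_nonneg (√6 / 3)], ?_⟩
  calc 2 * arccos (√6 / 3) ≤ 2 * π / 5 := by linarith [arccos_sqrt_six_div_three_le_pi_div_five]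
    _ ≤ 2 * π / n := by gcongr; exact_mod_cast hn5

theorem K_four_four_four_eq_zero : K [4, 4, 4] (2 * arccos (√6 / 3)) = 0 := by
  rw [K_two_mul_arccos _ (by linarith [sqrt_nonneg 6]) (by linarith [sqrt_six_lt_three])]
  simp only [List.map_cons, List.map_nil, List.sum_cons, List.sum_nil, Nat.cast_ofNat,
    arcsin_cos_pi_div_four_div_sqrt_six_div_three]
  ring

theorem K_three_four_five_eq_zero : K [3, 4, 5] (2 * arccos (√6 / 3)) = 0 := by
  rw [K_two_mul_arccos _ (by linarith [sqrt_nonneg 6]) (by linarith [sqrt_six_lt_three])]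
  simp only [List.map_cons, List.map_nil, List.sum_cons, List.sum_nil, Nat.cast_ofNat,
    cos_pi_div_three_div_sqrt_six_div_three, arcsin_cos_pi_div_four_div_sqrt_six_div_three,
    cos_pi_div_five_div_sqrt_six_div_three]
  linarith [arcsin_sqrt_six_div_four_add_arcsin]

/-- a_c((4,4,4)) = 2·arccos(√6/3), i.e. 6·arcsin(cos(π/4)/(√6/3)) = 2π.  Moreover K
at this side length also vanishes for (3,4,5):
2·arcsin(√6/4) + 2·arcsin((√5+1)√6/8) = 4π/3, equivalently
sin(π/3 + arcsin(√6/4)) = (√5+1)√6/8.  Consequently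
a_c((3,4,5)) = a_c((4,4,4)) = 2·arccos(√6/3). -/
theorem stmt9 :
    ac [4, 4, 4] = 2 * Real.arccos (Real.sqrt 6 / 3) ∧
    6 * Real.arcsin (Real.cos (Real.pi / 4) / (Real.sqrt 6 / 3)) = 2 * Real.pi ∧
    2 * Real.arcsin (Real.sqrt 6 / 4) +
      2 * Real.arcsin ((Real.sqrt 5 + 1) * Real.sqrt 6 / 8) = 4 * Real.pi / 3 ∧
    Real.sin (Real.pi / 3 + Real.arcsin (Real.sqrt 6 / 4)) =
      (Real.sqrt 5 + 1) * Real.sqrt 6 / 8 ∧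
    ac [3, 4, 5] = 2 * Real.arccos (Real.sqrt 6 / 3) := by
  have hac444 : ac [4, 4, 4] = 2 * arccos (√6 / 3) :=
    ac_eq_of_K_eq_zero (by decide)
      (two_mul_arccos_sqrt_six_div_three_mem_Icc (by decide) (by decide)) K_four_four_four_eq_zero
  have hac345 : ac [3, 4, 5] = 2 * arccos (√6 / 3) :=
    ac_eq_of_K_eq_zero (by decide)
      (two_mul_arccos_sqrt_six_div_three_mem_Icc (by decide) (by decide)) K_three_four_five_eq_zero
  refine ⟨hac444, ?_, ?_, sin_pi_div_three_add_arcsin_sqrt_six_div_four, hac345⟩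
  · linarith [arcsin_cos_pi_div_four_div_sqrt_six_div_three]
  · linarith [arcsin_sqrt_six_div_four_add_arcsin]
end

section
/- Let a₀ = 2·arccos(c) where c = √(12 − 2√2)·(1 + 3√2)/17. Then at side length a₀ both vertex patterns (4,4,8) and (3,4,4,4) have angle defect zero: 4·arcsin(cos(π/4)/c) + 2·arcsin(cos(π/8)/c) = 2π and 2·arcsin(cos(π/3)/c) + 6·arcsin(cos(π/4)/c) = 2π. Consequently a_c((4,4,8)) = a_c((3,4,4,4)) = a₀. -/
/-!
Put `x = arcsin (cos (π / 4) / c)`. The two angle sums equal `2π` when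
`sin (2 * x) = cos (π / 8) / c` and `sin (3 * x) = cos (π / 3) / c`. After division by
`sin x = cos (π / 4) / c` both conditions become `4 * cos x ^ 2 = 1 + cos (π / 4)`, which is what
the chosen `c` satisfies. The defect of a vertex pattern is strictly decreasing on its interval of
admissible side-lengths, so its zero is the critical side-length.
-/

open Real Set

-- Unfolding `K` shows `List.map` applied to the coercion of `p` to `List ℝ`, a monadic bind.
theorem K_eq_two_pi_sub_sum_map (p : List ℕ) (a : ℝ) :
    K p a = 2 * π - (p.map fun f : ℕ => 2 * arcsin (cos (π / f) / cos (a / 2))).sum := by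
  simp only [K, List.bind_eq_flatMap, List.pure_def, ← List.map_eq_flatMap, List.map_map,
    Function.comp_def]

theorem strictMonoOn_arcsin_cos_div_cos_half {θ : ℝ} (hθ : θ < π / 2) :
    StrictMonoOn (fun a => arcsin (cos θ / cos (a / 2))) (Icc 0 (2 * θ)) := by
  rintro a ⟨ha, _⟩ b ⟨_, hb⟩ hab
  have cos_θ_pos : 0 < cos θ := cos_pos_of_mem_Ioo ⟨by linarith, hθ⟩
  have cos_θ_le : cos θ ≤ cos (b / 2) :=
    cos_le_cos_of_nonneg_of_le_pi (by linarith) (by linarith) (by linarith)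
  have cos_b_lt : cos (b / 2) < cos (a / 2) :=
    cos_lt_cos_of_nonneg_of_le_pi (by linarith) (by linarith) (by linarith)
  have cos_b_pos : 0 < cos (b / 2) := cos_θ_pos.trans_le cos_θ_le
  have cos_a_pos : 0 < cos (a / 2) := cos_b_pos.trans cos_b_lt
  exact arcsin_lt_arcsin (neg_one_lt_zero.le.trans (by positivity))
    (div_lt_div_of_pos_left cos_θ_pos cos_b_pos cos_b_lt) ((div_le_one cos_b_pos).2 cos_θ_le)

/-- The vertex patterns `(f₁ ≤ f₂ ≤ … ≤ f_N)`: the nonempty nondecreasing lists of face sizes, each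
at least `3`. -/
structure IsVertexPattern (p : List ℕ) : Prop where
  ne_nil : p ≠ []
  sortedLE : p.SortedLE
  three_le : ∀ f ∈ p, 3 ≤ f

namespace IsVertexPattern

variable {p : List ℕ}

theorem le_getLast! (hp : IsVertexPattern p) {f : ℕ} (hf : f ∈ p) : f ≤ p.getLast! := by
  rw [List.getLast!_of_getLast? (List.getLast?_eq_some_getLast hp.ne_nil)]
  exact hp.sortedLE.pairwise.rel_getLast hf

theorem strictAntiOn_K (hp : IsVertexPattern p) :
    StrictAntiOn (K p) (Icc 0 (2 * π / (p.getLast! : ℝ))) := by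
  intro a ha b hb hab
  simp only [K_eq_two_pi_sub_sum_map]
  refine sub_lt_sub_left (List.sum_lt_sum_of_ne_nil hp.ne_nil _ _ fun f hf => ?_) _
  have three_le : (3 : ℝ) ≤ f := mod_cast hp.three_le f hf
  have le_last : (f : ℝ) ≤ p.getLast! := mod_cast hp.le_getLast! hf
  have pi_div_lt : π / f < π / 2 := div_lt_div_of_pos_left pi_pos two_pos (by linarith)
  have Icc_subset : Icc 0 (2 * π / (p.getLast! : ℝ)) ⊆ Icc 0 (2 * (π / f)) := by
    rw [← mul_div_assoc]
    exact Icc_subset_Icc_right (div_le_div_of_nonneg_left (by positivity) (by linarith) le_last)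
  exact mul_lt_mul_of_pos_left
    (strictMonoOn_arcsin_cos_div_cos_half pi_div_lt (Icc_subset ha) (Icc_subset hb) hab) two_pos

theorem ac_eq_of_K_eq_zero (hp : IsVertexPattern p) {a : ℝ}
    (ha : a ∈ Icc 0 (2 * π / (p.getLast! : ℝ))) (hK : K p a = 0) : ac p = a := by
  refine IsGreatest.csSup_eq ⟨⟨ha, hK.ge⟩, ?_⟩
  rintro b ⟨hb, hKb⟩
  exact (hp.strictAntiOn_K.le_iff_ge ha hb).1 (hK.trans_le hKb)

end IsVertexPattern

theorem arcsin_two_mul_mul_sqrt_one_sub_sq {s : ℝ} (hs : √2 / 2 ≤ s) (hs₁ : s ≤ 1) :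
    arcsin (2 * s * √(1 - s ^ 2)) = π - 2 * arcsin s := by
  have s_nonneg : 0 ≤ s := le_trans (by positivity) hs
  have le_arcsin : π / 4 ≤ arcsin s := pi_div_four_le_arcsin.2 hs
  have arcsin_le : arcsin s ≤ π / 2 := arcsin_le_pi_div_two s
  apply arcsin_eq_of_sin_eq
  · rw [sin_pi_sub, sin_two_mul, sin_arcsin (by linarith) hs₁, cos_arcsin]
  · constructor <;> linarith

theorem arcsin_three_mul_sub_four_mul_cube {s : ℝ} (hs : 1 / 2 ≤ s) (hs₁ : s ≤ 1) :
    arcsin (3 * s - 4 * s ^ 3) = π - 3 * arcsin s := by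
  have le_arcsin : π / 6 ≤ arcsin s := by
    rwa [le_arcsin_iff_sin_le' ⟨by linarith [pi_pos], by linarith [pi_pos]⟩, sin_pi_div_six]
  have arcsin_le : arcsin s ≤ π / 2 := arcsin_le_pi_div_two s
  apply arcsin_eq_of_sin_eq
  · rw [sin_pi_sub, sin_three_mul, sin_arcsin (by linarith) hs₁]
  · constructor <;> linarith

theorem cos_sq_pi_div_eight : cos (π / 8) ^ 2 = (2 + √2) / 4 := by
  rw [cos_pi_div_eight, div_pow, sq_sqrt (by positivity)]
  norm_num

/-- The cosine `c` of half the critical side-length `a₀` of the Johnson solid J19. -/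
noncomputable def critCos : ℝ := √(12 - 2 * √2) * (1 + 3 * √2) / 17

/-- The critical side-length `a₀` of the Johnson solid J19. -/
noncomputable def critSide : ℝ := 2 * arccos critCos

theorem critCos_pos : 0 < critCos := by
  have : 0 < √(12 - 2 * √2) := sqrt_pos.2 (by linarith [sqrt_two_lt_three_halves])
  unfold critCos
  positivity

theorem critCos_sq : critCos ^ 2 = (12 + 2 * √2) / 17 := by
  have sq_sqrt_two : √2 ^ 2 = 2 := sq_sqrt zero_le_two
  rw [critCos, div_pow, mul_pow, sq_sqrt (by linarith [sqrt_two_lt_three_halves])]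
  linear_combination (96 - 18 * √2) / 289 * sq_sqrt_two

theorem critCos_le_one : critCos ≤ 1 := by
  rw [← sq_le_one_iff₀ critCos_pos.le, critCos_sq]
  linarith [sqrt_two_lt_three_halves]

theorem cos_pi_div_eight_le_critCos : cos (π / 8) ≤ critCos := by
  refine le_of_sq_le_sq ?_ critCos_pos.le
  rw [cos_sq_pi_div_eight, critCos_sq]
  linarith [sqrt_two_lt_three_halves]

theorem cos_critSide_half : cos (critSide / 2) = critCos := by
  rw [critSide, mul_div_cancel_left₀ _ two_ne_zero,
    cos_arccos (by linarith [critCos_pos]) critCos_le_one]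

theorem critSide_mem_Icc {n : ℕ} (hn : 0 < n) (hn₈ : n ≤ 8) :
    critSide ∈ Icc 0 (2 * π / (n : ℝ)) := by
  have arccos_le : arccos critCos ≤ π / 8 := by
    rw [← arccos_cos (x := π / 8) (by positivity) (by linarith [pi_pos])]
    exact arccos_le_arccos cos_pi_div_eight_le_critCos
  refine ⟨mul_nonneg two_pos.le (arccos_nonneg critCos), ?_⟩
  calc critSide ≤ 2 * (π / 8) := mul_le_mul_of_nonneg_left arccos_le two_pos.le
    _ = 2 * π / 8 := by rw [mul_div_assoc]
    _ ≤ 2 * π / n :=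
      div_le_div_of_nonneg_left (by positivity) (mod_cast hn) (mod_cast hn₈)

theorem cos_pi_div_four_div_critCos_sq : (cos (π / 4) / critCos) ^ 2 = (6 - √2) / 8 := by
  have sq_sqrt_two : √2 ^ 2 = 2 := sq_sqrt zero_le_two
  rw [div_pow, div_eq_iff (pow_pos critCos_pos 2).ne', critCos_sq, cos_pi_div_four]
  linear_combination 9 / 34 * sq_sqrt_two

theorem sqrt_two_div_two_le_cos_pi_div_four_div_critCos : √2 / 2 ≤ cos (π / 4) / critCos := by
  rw [cos_pi_div_four]
  exact le_div_self (by positivity) critCos_pos critCos_le_one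

theorem cos_pi_div_four_div_critCos_le_one : cos (π / 4) / critCos ≤ 1 := by
  rw [div_le_one critCos_pos]
  exact (cos_le_cos_of_nonneg_of_le_pi (by positivity) (by linarith [pi_pos])
    (by linarith [pi_pos])).trans cos_pi_div_eight_le_critCos

theorem arcsin_cos_pi_div_eight_div_critCos :
    arcsin (cos (π / 8) / critCos) = π - 2 * arcsin (cos (π / 4) / critCos) := by
  have sq_sqrt_two : √2 ^ 2 = 2 := sq_sqrt zero_le_two
  have cos_pi_div_eight_pos : 0 < cos (π / 8) :=
    cos_pos_of_mem_Ioo ⟨by linarith [pi_pos], by linarith [pi_pos]⟩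
  have sqrt_eq : √(1 - (cos (π / 4) / critCos) ^ 2) = √2 / 2 * cos (π / 8) := by
    rw [sqrt_eq_iff_mul_self_eq_of_pos (by positivity), cos_pi_div_four_div_critCos_sq]
    linear_combination cos (π / 8) ^ 2 / 4 * sq_sqrt_two + cos_sq_pi_div_eight / 2
  rw [← arcsin_two_mul_mul_sqrt_one_sub_sq sqrt_two_div_two_le_cos_pi_div_four_div_critCos
    cos_pi_div_four_div_critCos_le_one, sqrt_eq, cos_pi_div_four]
  congr 1
  linear_combination -(cos (π / 8) / critCos / 2) * sq_sqrt_two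

theorem arcsin_cos_pi_div_three_div_critCos :
    arcsin (cos (π / 3) / critCos) = π - 3 * arcsin (cos (π / 4) / critCos) := by
  have sq_sqrt_two : √2 ^ 2 = 2 := sq_sqrt zero_le_two
  have half_le : 1 / 2 ≤ cos (π / 4) / critCos :=
    le_trans (by linarith [one_lt_sqrt_two]) sqrt_two_div_two_le_cos_pi_div_four_div_critCos
  rw [← arcsin_three_mul_sub_four_mul_cube half_le cos_pi_div_four_div_critCos_le_one]
  congr 1
  calc cos (π / 3) / critCos = cos (π / 4) / critCos * (√2 / 2) := by
        rw [cos_pi_div_three, cos_pi_div_four]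
        linear_combination -(1 / critCos / 4) * sq_sqrt_two
    _ = 3 * (cos (π / 4) / critCos) - 4 * (cos (π / 4) / critCos) ^ 3 := by
        linear_combination 4 * (cos (π / 4) / critCos) * cos_pi_div_four_div_critCos_sq

theorem K_four_four_eight (a : ℝ) :
    K [4, 4, 8] a = 2 * π -
      (4 * arcsin (cos (π / 4) / cos (a / 2)) + 2 * arcsin (cos (π / 8) / cos (a / 2))) := by
  simp only [K_eq_two_pi_sub_sum_map, List.map_cons, List.map_nil, List.sum_cons, List.sum_nil,
    Nat.cast_ofNat]
  ring

theorem K_three_four_four_four (a : ℝ) :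
    K [3, 4, 4, 4] a = 2 * π -
      (2 * arcsin (cos (π / 3) / cos (a / 2)) + 6 * arcsin (cos (π / 4) / cos (a / 2))) := by
  simp only [K_eq_two_pi_sub_sum_map, List.map_cons, List.map_nil, List.sum_cons, List.sum_nil,
    Nat.cast_ofNat]
  ring

theorem isVertexPattern_four_four_eight : IsVertexPattern [4, 4, 8] :=
  ⟨by decide, by decide, by decide⟩

theorem isVertexPattern_three_four_four_four : IsVertexPattern [3, 4, 4, 4] :=
  ⟨by decide, by decide, by decide⟩

/-- Let a₀ = 2·arccos c, c = √(12 − 2√2)·(1 + 3√2)/17.  At side length a₀ both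
patterns (4,4,8) and (3,4,4,4) have angle defect zero, so
a_c((4,4,8)) = a_c((3,4,4,4)) = a₀. -/
theorem stmt12 (c a0 : ℝ)
    (hc : c = Real.sqrt (12 - 2 * Real.sqrt 2) * (1 + 3 * Real.sqrt 2) / 17)
    (ha0 : a0 = 2 * Real.arccos c) :
    4 * Real.arcsin (Real.cos (Real.pi / 4) / c) +
      2 * Real.arcsin (Real.cos (Real.pi / 8) / c) = 2 * Real.pi ∧
    2 * Real.arcsin (Real.cos (Real.pi / 3) / c) +
      6 * Real.arcsin (Real.cos (Real.pi / 4) / c) = 2 * Real.pi ∧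
    K [4, 4, 8] a0 = 0 ∧ K [3, 4, 4, 4] a0 = 0 ∧
    ac [4, 4, 8] = a0 ∧ ac [3, 4, 4, 4] = a0 := by
  obtain rfl : c = critCos := hc
  obtain rfl : a0 = critSide := ha0
  have sum_448 : 4 * arcsin (cos (π / 4) / critCos) + 2 * arcsin (cos (π / 8) / critCos) =
      2 * π := by
    rw [arcsin_cos_pi_div_eight_div_critCos]
    ring
  have sum_3444 : 2 * arcsin (cos (π / 3) / critCos) + 6 * arcsin (cos (π / 4) / critCos) =
      2 * π := by
    rw [arcsin_cos_pi_div_three_div_critCos]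
    ring
  have K_448 : K [4, 4, 8] critSide = 0 := by
    rw [K_four_four_eight, cos_critSide_half, sum_448, sub_self]
  have K_3444 : K [3, 4, 4, 4] critSide = 0 := by
    rw [K_three_four_four_four, cos_critSide_half, sum_3444, sub_self]
  exact ⟨sum_448, sum_3444, K_448, K_3444,
    isVertexPattern_four_four_eight.ac_eq_of_K_eq_zero
      (critSide_mem_Icc (by decide) (by decide)) K_448,
    isVertexPattern_three_four_four_four.ac_eq_of_K_eq_zero
      (critSide_mem_Icc (by decide) (by decide)) K_3444⟩
end

section
/- Let a₁ be the unique solution in (0, 2π/29] of K_{a}((3,7,29)) = 0 and a₂ the unique solution in (0, 2π/16] of K_{a}((3,9,16)) = 0, i.e. a₁ = a_c((3,7,29)) and a₂ = a_c((3,9,16)). Then a₁ < a₂, and 1.647×10⁻⁵ < K_{a₁}((3,9,16)) < 1.648×10⁻⁵. -/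
/-!
Only `t = cos (a / 2)` matters: writing `α_f(t) = arcsin (cos (π / f) / t)` for half the interior
angle of an `f`-gon, `K p a = 2π − Σ 2 α_f(t)` is strictly increasing in `t ≥ cos (π / f_N)`, and
`t` is strictly decreasing in `a`. Hence a zero of `a ↦ K p a` is the critical side-length, and
`a₁ < a₂` amounts to `0 < K [3, 9, 16] a₁`. Evaluating `K [3, 7, 29]` at two rational values of `t`
brackets `cos (a₁ / 2)` tightly enough for the values of `K [3, 9, 16]` at the same two points to
give both bounds. The evaluations are rational arithmetic: `y ≤ α_f(t)` is equivalent to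
`t * sin y ≤ cos (π / f)`, and the partial sums of the sine and cosine series lie alternately above
and below their limits.
-/

open Finset (range sum_range_succ)
open Nat (factorial factorial_succ)
open scoped Nat
open Real Set

section Taylor

/-- The sum of the first `n` nonzero terms of the Taylor series of `cos` at `0`. -/
noncomputable def cosTaylor (n : ℕ) (x : ℝ) : ℝ :=
  ∑ i ∈ range n, (-1) ^ i * (x ^ (2 * i) / (2 * i)!)

/-- The sum of the first `n` nonzero terms of the Taylor series of `sin` at `0`. -/
noncomputable def sinTaylor (n : ℕ) (x : ℝ) : ℝ :=
  ∑ i ∈ range n, (-1) ^ i * (x ^ (2 * i + 1) / (2 * i + 1)!)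

lemma antitone_pow_two_mul_add_div_factorial (j : ℕ) {x : ℝ} (hx : 0 ≤ x)
    (hx2 : x ^ 2 ≤ (j + 1) * (j + 2)) :
    Antitone fun i : ℕ ↦ x ^ (2 * i + j) / ((2 * i + j)! : ℝ) := by
  refine antitone_nat_of_succ_le fun i ↦ ?_
  have ratio_le_one : x ^ 2 / ((2 * i + j + 1) * (2 * i + j + 2)) ≤ 1 := by
    rw [div_le_one (by positivity)]
    refine hx2.trans ?_
    gcongr <;> linarith [(i.cast_nonneg : (0 : ℝ) ≤ i)]
  calc x ^ (2 * (i + 1) + j) / ((2 * (i + 1) + j)! : ℝ)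
      = x ^ (2 * i + j) / ((2 * i + j)! : ℝ) *
          (x ^ 2 / ((2 * i + j + 1) * (2 * i + j + 2))) := by
        rw [show 2 * (i + 1) + j = 2 * i + j + 1 + 1 by ring, factorial_succ, factorial_succ]
        push_cast
        field_simp
        ring
    _ ≤ x ^ (2 * i + j) / ((2 * i + j)! : ℝ) :=
        mul_le_of_le_one_right (by positivity) ratio_le_one

variable {x : ℝ} (n : ℕ)

lemma cosTaylor_two_mul_le_cos (hx : 0 ≤ x) (hx2 : x ^ 2 ≤ 2) : cosTaylor (2 * n) x ≤ cos x :=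
  (antitone_pow_two_mul_add_div_factorial 0 hx (by simpa using hx2)).alternating_series_le_tendsto
    (by simpa only [mul_div_assoc, add_zero] using (hasSum_cos x).tendsto_sum_nat) n

lemma cos_le_cosTaylor_two_mul_add_one (hx : 0 ≤ x) (hx2 : x ^ 2 ≤ 2) :
    cos x ≤ cosTaylor (2 * n + 1) x :=
  (antitone_pow_two_mul_add_div_factorial 0 hx (by simpa using hx2)).tendsto_le_alternating_series
    (by simpa only [mul_div_assoc, add_zero] using (hasSum_cos x).tendsto_sum_nat) n

lemma sinTaylor_two_mul_le_sin (hx : 0 ≤ x) (hx2 : x ^ 2 ≤ 6) : sinTaylor (2 * n) x ≤ sin x :=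
  (antitone_pow_two_mul_add_div_factorial 1 hx
    (by norm_num; exact hx2)).alternating_series_le_tendsto
    (by simpa only [mul_div_assoc] using (hasSum_sin x).tendsto_sum_nat) n

lemma sin_le_sinTaylor_two_mul_add_one (hx : 0 ≤ x) (hx2 : x ^ 2 ≤ 6) :
    sin x ≤ sinTaylor (2 * n + 1) x :=
  (antitone_pow_two_mul_add_div_factorial 1 hx
    (by norm_num; exact hx2)).tendsto_le_alternating_series
    (by simpa only [mul_div_assoc] using (hasSum_sin x).tendsto_sum_nat) n

end Taylor

section CosPiDiv

variable {f N : ℕ}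

lemma pi_div_natCast_le (hf : 3 ≤ f) : π / f ≤ π / 3 := by
  have : (3 : ℝ) ≤ f := mod_cast hf
  gcongr

lemma cos_pi_div_pos (hf : 3 ≤ f) : 0 < cos (π / f) :=
  cos_pos_of_mem_Ioo
    ⟨by linarith [pi_pos, show 0 ≤ π / f by positivity], by linarith [pi_pos, pi_div_natCast_le hf]⟩

lemma cos_pi_div_le_cos_pi_div (hf : 3 ≤ f) (hfN : f ≤ N) : cos (π / f) ≤ cos (π / N) := by
  apply cos_le_cos_of_nonneg_of_le_pi (by positivity)
  · linarith [pi_pos, pi_div_natCast_le hf]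
  · gcongr

lemma cosTaylor_le_cos_pi_div (n : ℕ) {q : ℝ} (hf : 3 ≤ f) (hq : π ≤ q) (hq4 : q ≤ 4) :
    cosTaylor (2 * n) (q / f) ≤ cos (π / f) := by
  have hf3 : (3 : ℝ) ≤ f := mod_cast hf
  have hq0 : 0 ≤ q / f := div_nonneg (pi_pos.le.trans hq) f.cast_nonneg
  have hqf : q / f ≤ 4 / 3 := by gcongr
  calc cosTaylor (2 * n) (q / f)
      ≤ cos (q / f) := cosTaylor_two_mul_le_cos n hq0 (by nlinarith)
    _ ≤ cos (π / f) :=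
        cos_le_cos_of_nonneg_of_le_pi (by positivity) (by linarith [pi_gt_three]) (by gcongr)

lemma cos_pi_div_le_cosTaylor (n : ℕ) {q : ℝ} (hf : 3 ≤ f) (hq : q ≤ π) (hq0 : 0 ≤ q) :
    cos (π / f) ≤ cosTaylor (2 * n + 1) (q / f) := by
  have hf3 : (3 : ℝ) ≤ f := mod_cast hf
  have hqf : q / f ≤ 4 / 3 := by
    gcongr
    exact hq.trans pi_le_four
  have hqf0 : 0 ≤ q / f := by positivity
  calc cos (π / f)
      ≤ cos (q / f) := cos_le_cos_of_nonneg_of_le_pi (by positivity)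
        (by linarith [pi_pos, pi_div_natCast_le hf]) (by gcongr)
    _ ≤ cosTaylor (2 * n + 1) (q / f) :=
        cos_le_cosTaylor_two_mul_add_one n hqf0 (by nlinarith)

end CosPiDiv

section HalfAngle

/-- Half the interior angle of the regular spherical `f`-gon whose side-length `a` satisfies
`cos (a / 2) = t`. It takes the junk value `π / 2` for `0 < t < cos (π / f)`, where no such polygon
exists. -/
noncomputable def halfAngle (f : ℕ) (t : ℝ) : ℝ :=
  arcsin (cos (π / f) / t)

variable {f : ℕ} {t y q : ℝ}

lemma halfAngle_strictAntiOn (hf : 3 ≤ f) : StrictAntiOn (halfAngle f) (Ici (cos (π / f))) := by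
  have hc := cos_pi_div_pos hf
  have ratio_mem : ∀ t ∈ Ici (cos (π / f)), cos (π / f) / t ∈ Icc (-1 : ℝ) 1 := fun t ht ↦
    have ht0 : 0 < t := hc.trans_le ht
    ⟨by linarith [div_pos hc ht0], (div_le_one ht0).2 ht⟩
  intro s hs t ht hst
  exact strictMonoOn_arcsin (ratio_mem t ht) (ratio_mem s hs)
    (div_lt_div_of_pos_left hc (hc.trans_le hs) hst)

lemma le_halfAngle (n : ℕ) (hq : π ≤ q) (hq4 : q ≤ 4) (hf : 3 ≤ f) (ht : 0 < t)
    (hy : y ∈ Icc 0 (3 / 2)) (h : sinTaylor (2 * n + 1) y * t ≤ cosTaylor (2 * n) (q / f)) :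
    y ≤ halfAngle f t := by
  rw [halfAngle,
    le_arcsin_iff_sin_le' ⟨by linarith [hy.1, pi_pos], by linarith [hy.2, pi_gt_three]⟩,
    le_div_iff₀ ht]
  calc sin y * t
      ≤ sinTaylor (2 * n + 1) y * t := by
        gcongr
        exact sin_le_sinTaylor_two_mul_add_one n hy.1 (by nlinarith [hy.1, hy.2])
    _ ≤ cosTaylor (2 * n) (q / f) := h
    _ ≤ cos (π / f) := cosTaylor_le_cos_pi_div n hf hq hq4

lemma halfAngle_le (n : ℕ) (hq : q ≤ π) (hq0 : 0 ≤ q) (hf : 3 ≤ f) (ht : 0 < t)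
    (hy : y ∈ Icc 0 (3 / 2)) (h : cosTaylor (2 * n + 1) (q / f) ≤ sinTaylor (2 * n) y * t) :
    halfAngle f t ≤ y := by
  rw [halfAngle,
    arcsin_le_iff_le_sin' ⟨by linarith [hy.1, pi_pos], by linarith [hy.2, pi_gt_three]⟩,
    div_le_iff₀ ht]
  calc cos (π / f)
      ≤ cosTaylor (2 * n + 1) (q / f) := cos_pi_div_le_cosTaylor n hf hq hq0
    _ ≤ sinTaylor (2 * n) y * t := h
    _ ≤ sin y * t := by
        gcongr
        exact sinTaylor_two_mul_le_sin n hy.1 (by nlinarith [hy.1, hy.2])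

end HalfAngle

section Defect

/-- The angle defect of a vertex pattern as a function of `t = cos (a / 2)`, where `a` is the
side-length. The parameter `t` rather than `a` is what admits evaluation at rational points. -/
noncomputable def defect (p : List ℕ) (t : ℝ) : ℝ :=
  2 * π - (p.map fun f ↦ 2 * halfAngle f t).sum

-- Not `rfl`, since `K` first coerces the whole list `p` to `List ℝ`.
lemma K_eq_defect (p : List ℕ) (a : ℝ) : K p a = defect p (cos (a / 2)) := by
  simp [K, defect, halfAngle, ← List.map_eq_flatMap, Function.comp_def]

lemma defect_triple (l m n : ℕ) (t : ℝ) :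
    defect [l, m, n] t = 2 * (π - (halfAngle l t + halfAngle m t + halfAngle n t)) := by
  simp only [defect, List.map_cons, List.map_nil, List.sum_cons, List.sum_nil]
  ring

variable {p : List ℕ} {N : ℕ}

lemma defect_strictMonoOn (hp : p ≠ []) (h3 : ∀ f ∈ p, 3 ≤ f) (hN : ∀ f ∈ p, f ≤ N) :
    StrictMonoOn (defect p) (Ici (cos (π / N))) := by
  intro s hs t ht hst
  refine sub_lt_sub_left (List.sum_lt_sum_of_ne_nil hp _ _ fun f hf ↦ ?_) _
  have hfN := cos_pi_div_le_cos_pi_div (h3 f hf) (hN f hf)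
  have hangle := halfAngle_strictAntiOn (h3 f hf) (hfN.trans hs) (hfN.trans ht) hst
  gcongr

lemma cos_half_mem_Ici (hN : N ≠ 0) {a : ℝ} (ha : a ∈ Icc 0 (2 * π / N)) :
    cos (a / 2) ∈ Ici (cos (π / N)) := by
  have hN1 : (1 : ℝ) ≤ N := mod_cast Nat.one_le_iff_ne_zero.2 hN
  apply cos_le_cos_of_nonneg_of_le_pi (by linarith [ha.1]) (div_le_self pi_pos.le hN1)
  linarith [ha.2, mul_div_assoc 2 π (N : ℝ)]

lemma cos_half_strictAntiOn : StrictAntiOn (fun a : ℝ ↦ cos (a / 2)) (Icc 0 (2 * π)) :=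
  fun a ha b hb hab ↦
    cos_lt_cos_of_nonneg_of_le_pi (by linarith [ha.1]) (by linarith [hb.2]) (by linarith)

lemma K_strictAntiOn (hp : p ≠ []) (h3 : ∀ f ∈ p, 3 ≤ f) (hN : ∀ f ∈ p, f ≤ N) :
    StrictAntiOn (K p) (Icc 0 (2 * π / N)) := by
  obtain ⟨f, hf⟩ := List.exists_mem_of_ne_nil p hp
  have hN1 : 1 ≤ N := (by norm_num : 1 ≤ 3).trans ((h3 f hf).trans (hN f hf))
  have hsub : Icc 0 (2 * π / N) ⊆ Icc 0 (2 * π) :=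
    Icc_subset_Icc_right (div_le_self two_pi_pos.le (mod_cast hN1))
  rw [funext (K_eq_defect p)]
  exact (defect_strictMonoOn hp h3 hN).comp_strictAntiOn (cos_half_strictAntiOn.mono hsub)
    fun _ ha ↦ cos_half_mem_Ici (Nat.one_le_iff_ne_zero.1 hN1) ha

lemma eq_ac_of_K_eq_zero (h3 : ∀ f ∈ p, 3 ≤ f) (hmax : ∀ f ∈ p, f ≤ p.getLast!) {a : ℝ}
    (ha : a ∈ Icc 0 (2 * π / p.getLast!)) (hK : K p a = 0) : a = ac p := by
  have hp : p ≠ [] := by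
    rintro rfl
    simp [K] at hK
  have hgreatest : IsGreatest {b | b ∈ Icc 0 (2 * π / p.getLast!) ∧ 0 ≤ K p b} a := by
    refine ⟨⟨ha, hK.ge⟩, ?_⟩
    rintro b ⟨hb, hKb⟩
    exact ((K_strictAntiOn hp h3 hmax).le_iff_ge ha hb).1 (hK.trans_le hKb)
  exact hgreatest.csSup_eq.symm

end Defect

-- `0.997456667` and `0.9974566673` bracket the zero `0.99745666713…` of `defect [3, 7, 29]`; the
-- angle bounds are the numerical values at these points, rounded outward in the eleventh decimal.

lemma defect_3_7_29_neg : defect [3, 7, 29] 0.997456667 < 0 := by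
  obtain ⟨h3, h7, h29⟩ :
      0.52507154039 ≤ halfAngle 3 0.997456667 ∧ 1.12732158484 ≤ halfAngle 7 0.997456667 ∧
        1.48919953024 ≤ halfAngle 29 0.997456667 := by
    refine ⟨?_, ?_, ?_⟩ <;> apply le_halfAngle 5 pi_lt_d20.le <;>
      norm_num [sinTaylor, cosTaylor, sum_range_succ, factorial]
  rw [defect_triple]
  linarith [pi_lt_d20]

lemma defect_3_7_29_pos : 0 < defect [3, 7, 29] 0.9974566673 := by
  obtain ⟨h3, h7, h29⟩ :
      halfAngle 3 0.9974566673 ≤ 0.52507154025 ∧ halfAngle 7 0.9974566673 ≤ 1.12732158424 ∧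
        halfAngle 29 0.9974566673 ≤ 1.48919952659 := by
    refine ⟨?_, ?_, ?_⟩ <;> apply halfAngle_le 5 pi_gt_d20.le <;>
      norm_num [sinTaylor, cosTaylor, sum_range_succ, factorial]
  rw [defect_triple]
  linarith [pi_gt_d20]

lemma lt_defect_3_9_16 : 1647 / 100000000 < defect [3, 9, 16] 0.997456667 := by
  obtain ⟨h3, h9, h16⟩ :
      halfAngle 3 0.997456667 ≤ 0.52507154042 ∧ halfAngle 9 0.997456667 ≤ 1.22880485386 ∧
        halfAngle 16 0.997456667 ≤ 1.38770802414 := by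
    refine ⟨?_, ?_, ?_⟩ <;> apply halfAngle_le 5 pi_gt_d20.le <;>
      norm_num [sinTaylor, cosTaylor, sum_range_succ, factorial]
  rw [defect_triple]
  linarith [pi_gt_d20]

lemma defect_3_9_16_lt : defect [3, 9, 16] 0.9974566673 < 1648 / 100000000 := by
  obtain ⟨h3, h9, h16⟩ :
      0.52507154022 ≤ halfAngle 3 0.9974566673 ∧ 1.22880485299 ≤ halfAngle 9 0.9974566673 ∧
        1.38770802249 ≤ halfAngle 16 0.9974566673 := by
    refine ⟨?_, ?_, ?_⟩ <;> apply le_halfAngle 5 pi_lt_d20.le <;>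
      norm_num [sinTaylor, cosTaylor, sum_range_succ, factorial]
  rw [defect_triple]
  linarith [pi_lt_d20]

lemma cos_pi_div_29_le : cos (π / (29 : ℕ)) ≤ 0.997456667 :=
  (cos_pi_div_le_cosTaylor 1 (by norm_num) pi_gt_three.le (by norm_num)).trans
    (by norm_num [cosTaylor, sum_range_succ, factorial])

lemma cos_half_mem_Ioo_of_K_3_7_29_eq_zero {a : ℝ} (ha : a ∈ Icc 0 (2 * π / (29 : ℕ)))
    (hK : K [3, 7, 29] a = 0) :
    cos (a / 2) ∈ Ioo 0.997456667 0.9974566673 := by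
  have hmono : StrictMonoOn (defect [3, 7, 29]) (Ici (cos (π / (29 : ℕ)))) :=
    defect_strictMonoOn (by simp) (by simp) (by simp)
  have ht := cos_half_mem_Ici (by norm_num) ha
  have hlo : 0.997456667 ∈ Ici (cos (π / (29 : ℕ))) := cos_pi_div_29_le
  have hhi : 0.9974566673 ∈ Ici (cos (π / (29 : ℕ))) := cos_pi_div_29_le.trans (by norm_num)
  rw [K_eq_defect] at hK
  constructor
  · rw [← hmono.lt_iff_lt hlo ht, hK]
    exact defect_3_7_29_neg
  · rw [← hmono.lt_iff_lt ht hhi, hK]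
    exact defect_3_7_29_pos

lemma K_3_9_16_mem_Ioo {a : ℝ} (ha : cos (a / 2) ∈ Ioo 0.997456667 0.9974566673) :
    K [3, 9, 16] a ∈ Ioo (1647 / 100000000) (1648 / 100000000) := by
  have hmono : StrictMonoOn (defect [3, 9, 16]) (Ici (cos (π / (29 : ℕ)))) :=
    defect_strictMonoOn (by simp) (by simp) (by simp)
  have ht : cos (a / 2) ∈ Ici (cos (π / (29 : ℕ))) := cos_pi_div_29_le.trans ha.1.le
  rw [K_eq_defect]
  exact ⟨lt_defect_3_9_16.trans (hmono cos_pi_div_29_le ht ha.1),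
    (hmono ht (ht.trans ha.2.le) ha.2).trans defect_3_9_16_lt⟩

/-- Let a₁ be the unique solution in (0, 2π/29] of K_a((3,7,29)) = 0 and a₂ the
unique solution in (0, 2π/16] of K_a((3,9,16)) = 0, i.e. a₁ = a_c((3,7,29)) and
a₂ = a_c((3,9,16)).  Then a₁ < a₂ and 1.647×10⁻⁵ < K_{a₁}((3,9,16)) < 1.648×10⁻⁵. -/
theorem stmt17 (a1 a2 : ℝ)
    (ha1 : a1 ∈ Set.Ioc (0:ℝ) (2 * Real.pi / 29)) (hK1 : K [3, 7, 29] a1 = 0)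
    (ha2 : a2 ∈ Set.Ioc (0:ℝ) (2 * Real.pi / 16)) (hK2 : K [3, 9, 16] a2 = 0) :
    a1 = ac [3, 7, 29] ∧ a2 = ac [3, 9, 16] ∧ a1 < a2 ∧
      1647 / 100000000 < K [3, 9, 16] a1 ∧ K [3, 9, 16] a1 < 1648 / 100000000 := by
  have ha1' : a1 ∈ Icc 0 (2 * π / (29 : ℕ)) := mod_cast Ioc_subset_Icc_self ha1
  have ha2' : a2 ∈ Icc 0 (2 * π / (16 : ℕ)) := mod_cast Ioc_subset_Icc_self ha2
  have hK12 := K_3_9_16_mem_Ioo (cos_half_mem_Ioo_of_K_3_7_29_eq_zero ha1' hK1)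
  have ha1_16 : a1 ∈ Icc 0 (2 * π / (16 : ℕ)) :=
    ⟨ha1'.1, ha1'.2.trans (by gcongr; norm_num)⟩
  have hanti : StrictAntiOn (K [3, 9, 16]) (Icc 0 (2 * π / (16 : ℕ))) :=
    K_strictAntiOn (by simp) (by simp) (by simp)
  refine ⟨eq_ac_of_K_eq_zero (by simp) (by simp) ha1' hK1,
    eq_ac_of_K_eq_zero (by simp) (by simp) ha2' hK2, ?_, hK12⟩
  rw [← hanti.lt_iff_gt ha2' ha1_16, hK2]
  exact lt_trans (by norm_num) hK12.1
end
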